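/- arXiv:2604.03615 — 4 statements merged into one kernel-verified Lean document; each statement's English description precedes it below -/
import Mathlib

section
/- Let n ≥ 2 and let L = I_n − A be the Laplacian matrix of the directed cycle C⃗_n, where A_{i,j} = 1 iff j ≡ i+1 (mod n). Then the trace norm of L satisfies ‖L‖_* = Σ_{j=0}^{n−1} 2·sin(πj/n) = 2·cot(π/(2n)). -/
open Matrix

/-- The multiset of singular values of a real square matrix `M`: the nonnegative
square roots of the eigenvalues of `M * Mᵀ` (the roots of its characteristic
polynomial, counted with multiplicity). -/
noncomputable def singularValues {m : Type*} [Fintype m] [DecidableEq m]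
    (M : Matrix m m ℝ) : Multiset ℝ :=
  ((M * Mᵀ).charpoly.roots).map Real.sqrt

/-- The trace norm of a real square matrix: the sum of its singular values. -/
noncomputable def traceNorm {m : Type*} [Fintype m] [DecidableEq m]
    (M : Matrix m m ℝ) : ℝ :=
  (singularValues M).sum

/-- Adjacency matrix of the directed cycle C⃗_n: entry (i,j) is 1 iff j ≡ i+1 (mod n). -/
def cycleAdj (n : ℕ) : Matrix (Fin n) (Fin n) ℝ :=
  fun i j => if (j : ℕ) = ((i : ℕ) + 1) % n then 1 else 0

/-- Adjacency matrix of the directed path P⃗_n: entry (i,j) is 1 iff j = i+1. -/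
def pathAdj (n : ℕ) : Matrix (Fin n) (Fin n) ℝ :=
  fun i j => if (j : ℕ) = (i : ℕ) + 1 then 1 else 0

/-- The outdegree matrix of a digraph with adjacency matrix `A`: the diagonal
matrix of row sums of `A`. -/
noncomputable def outDeg {m : Type*} [Fintype m] [DecidableEq m]
    (A : Matrix m m ℝ) : Matrix m m ℝ :=
  Matrix.diagonal (fun i => ∑ j, A i j)

/-- Adjacency matrix of the oriented star S⃗_n(x,y) on n = x+y+1 vertices:
vertex 0 is the center, vertices 1..x are the out-neighbours of the center and
vertices x+1..x+y are its in-neighbours. -/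
def starAdj (x y : ℕ) : Matrix (Fin (x + y + 1)) (Fin (x + y + 1)) ℝ :=
  fun i j =>
    if (i : ℕ) = 0 ∧ 1 ≤ (j : ℕ) ∧ (j : ℕ) ≤ x then 1
    else if (j : ℕ) = 0 ∧ x + 1 ≤ (i : ℕ) then 1 else 0

/-- Adjacency matrix of the out-star S⃗_n(n-1,0): vertex 0 is the center with
arcs to all other vertices, and there are no other arcs. -/
def outStarAdj (n : ℕ) : Matrix (Fin n) (Fin n) ℝ :=
  fun i j => if (i : ℕ) = 0 ∧ (j : ℕ) ≠ 0 then 1 else 0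

/-- Adjacency matrix of the disjoint union C⃗_{n-1} ∪ K₁: a directed (n-1)-cycle
on the first n-1 vertices together with an isolated last vertex. -/
def cycleK1Adj (n : ℕ) : Matrix (Fin n) (Fin n) ℝ :=
  fun i j =>
    if (i : ℕ) < n - 1 ∧ (j : ℕ) < n - 1 ∧ (j : ℕ) = ((i : ℕ) + 1) % (n - 1) then 1 else 0

lemma aux_cycleAdj_eq (n : ℕ) (hn : 2 ≤ n) [NeZero n] (i j : Fin n) :
    cycleAdj n i j = if j = i + 1 then 1 else 0 := by
  unfold cycleAdj
  have h1 : ((i + 1 : Fin n) : ℕ) = ((i : ℕ) + 1) % n := by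
    rw [Fin.val_add, Fin.val_one', Nat.mod_eq_of_lt (show 1 < n by omega)]
  congr 1
  rw [Fin.ext_iff, h1]

lemma aux_mul_transpose (n : ℕ) (hn : 2 ≤ n) : cycleAdj n * (cycleAdj n)ᵀ = 1 := by
  haveI : NeZero n := ⟨by omega⟩
  ext i j
  simp [Matrix.mul_apply, aux_cycleAdj_eq n hn, Matrix.one_apply, eq_comm]

lemma aux_eig (n : ℕ) (hn : 2 ≤ n) (ζ : ℂ) (h : ζ ^ n = 1) :
    (cycleAdj n).map Complex.ofRealHom * (Matrix.of fun i j : Fin n => (ζ ^ (j : ℕ)) ^ (i : ℕ))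
     = (Matrix.of fun i j : Fin n => (ζ ^ (j : ℕ)) ^ (i : ℕ)) *
       Matrix.diagonal (fun j : Fin n => ζ ^ (j : ℕ)) := by
  haveI : NeZero n := ⟨by omega⟩
  ext i j
  have h1 : ((i + 1 : Fin n) : ℕ) = ((i : ℕ) + 1) % n := by
    rw [Fin.val_add, Fin.val_one', Nat.mod_eq_of_lt (show 1 < n by omega)]
  have h2 : (ζ ^ (j : ℕ)) ^ n = 1 := by rw [← pow_mul, mul_comm, pow_mul, h, one_pow]
  rw [Matrix.mul_diagonal, Matrix.mul_apply]
  simp only [Matrix.map_apply, aux_cycleAdj_eq n hn, Matrix.of_apply]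
  simp only [apply_ite Complex.ofRealHom, map_one, map_zero, ite_mul, one_mul, zero_mul,
    Finset.sum_ite_eq', Finset.sum_ite_eq, Finset.mem_univ, if_true]
  rw [h1, ← pow_succ, ← pow_eq_pow_mod _ h2]

lemma aux_charpoly (n : ℕ) (hn : 2 ≤ n) :
    ((1 - cycleAdj n) * (1 - cycleAdj n)ᵀ).charpoly =
      ∏ j : Fin n, (Polynomial.X -
        Polynomial.C ((2 * Real.sin (Real.pi * (j : ℕ) / n)) ^ 2)) := by
  have hn0 : n ≠ 0 := by omega
  set ζ : ℂ := Complex.exp (2 * Real.pi * Complex.I / n) with hζ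
  have hp : IsPrimitiveRoot ζ n := Complex.isPrimitiveRoot_exp n hn0
  have hz0 : ζ ≠ 0 := Complex.exp_ne_zero _
  set F : Matrix (Fin n) (Fin n) ℂ := Matrix.of fun i j : Fin n => (ζ ^ (j : ℕ)) ^ (i : ℕ) with hF
  set D : Matrix (Fin n) (Fin n) ℂ := Matrix.diagonal (fun j : Fin n => ζ ^ (j : ℕ)) with hD
  set D' : Matrix (Fin n) (Fin n) ℂ := Matrix.diagonal (fun j : Fin n => (ζ ^ (j : ℕ))⁻¹) with hD'
  set B := (cycleAdj n).map Complex.ofRealHom with hB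
  have hDD : D * D' = 1 := by
    rw [hD, hD', Matrix.diagonal_mul_diagonal, ← Matrix.diagonal_one]
    congr 1; ext j; exact mul_inv_cancel₀ (pow_ne_zero _ hz0)
  have e1 : B * F = F * D := aux_eig n hn ζ hp.pow_eq_one
  have hBB : B * Bᵀ = 1 := by
    rw [hB, ← Matrix.transpose_map, ← Matrix.map_mul, aux_mul_transpose n hn]
    simp
  have hBB' : Bᵀ * B = 1 := mul_eq_one_comm.mp hBB
  have e2 : Bᵀ * F = F * D' := by
    calc Bᵀ * F = Bᵀ * (F * D) * D' := by
          rw [Matrix.mul_assoc Bᵀ, Matrix.mul_assoc F, hDD, Matrix.mul_one]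
      _ = (Bᵀ * B) * F * D' := by rw [← e1, Matrix.mul_assoc Bᵀ B F]
      _ = F * D' := by rw [hBB', Matrix.one_mul]
  have hdet : IsUnit F.det := by
    have : F = (Matrix.vandermonde (fun j : Fin n => ζ ^ (j : ℕ)))ᵀ := by
      ext i j; simp [hF, Matrix.vandermonde_apply]
    rw [this, Matrix.det_transpose, isUnit_iff_ne_zero, Matrix.det_vandermonde_ne_zero_iff]
    intro a b hab
    exact Fin.ext (hp.pow_inj a.2 b.2 hab)
  set M := ((1 - cycleAdj n) * (1 - cycleAdj n)ᵀ).map Complex.ofRealHom with hM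
  have hM2 : M = 1 + 1 - B - Bᵀ := by
    have : (1 - cycleAdj n) * (1 - cycleAdj n)ᵀ = 1 + 1 - cycleAdj n - (cycleAdj n)ᵀ := by
      rw [Matrix.transpose_sub, Matrix.transpose_one, sub_mul, mul_sub, mul_sub,
        aux_mul_transpose n hn]
      simp only [one_mul, mul_one]; abel
    rw [hM, this, hB]
    ext i j
    simp [Matrix.one_apply, apply_ite Complex.ofReal]
  have hMF : M * F = F * (1 + 1 - D - D') := by
    rw [hM2]; simp only [sub_mul, mul_sub, add_mul, mul_add, one_mul, mul_one, e1, e2]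
  have hE : (1 + 1 - D - D') = Matrix.diagonal (fun j : Fin n =>
      (((2 * Real.sin (Real.pi * (j : ℕ) / n)) ^ 2 : ℝ) : ℂ)) := by
    rw [hD, hD', ← Matrix.diagonal_one, Matrix.diagonal_add, Matrix.diagonal_sub,
      Matrix.diagonal_sub]
    congr 1; ext j
    have a1 : ζ ^ (j : ℕ) = Complex.exp ((Real.pi * (j : ℕ) / n : ℂ) * Complex.I) ^ 2 := by
      rw [hζ, ← Complex.exp_nat_mul, ← Complex.exp_nat_mul]; congr 1; push_cast; ring
    rw [a1]
    push_cast
    have a2 := Complex.sin_sq_add_cos_sq (Real.pi * (j : ℕ) / n : ℂ)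
    rw [← inv_pow, ← Complex.exp_neg, ← neg_mul, Complex.exp_mul_I, Complex.exp_mul_I,
      Complex.cos_neg, Complex.sin_neg]
    linear_combination 
      (-2) * a2 + (-2 * Complex.sin (Real.pi * (j : ℕ) / n : ℂ) ^ 2) * Complex.I_sq
  have hMc : M.charpoly = (1 + 1 - D - D').charpoly := by
    have : M = F * ((1 + 1 - D - D') * F⁻¹) := by
      rw [← Matrix.mul_assoc, ← hMF, Matrix.mul_assoc, Matrix.mul_nonsing_inv _ hdet,
        Matrix.mul_one]
    rw [this, Matrix.charpoly_mul_comm, Matrix.mul_assoc, Matrix.nonsing_inv_mul _ hdet,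
      Matrix.mul_one]
  apply Polynomial.map_injective Complex.ofRealHom Complex.ofReal_injective
  rw [← Matrix.charpoly_map, ← hM, hMc, hE, Matrix.charpoly_diagonal, Polynomial.map_prod]
  refine Finset.prod_congr rfl fun j _ => ?_
  rw [Polynomial.map_sub, Polynomial.map_X, Polynomial.map_C]
  rfl

lemma aux_sum (n : ℕ) (hn : 2 ≤ n) :
    ∑ j ∈ Finset.range n, 2 * Real.sin (Real.pi * j / n) = 2 * Real.cot (Real.pi / (2 * n)) := by
  have hn' : (2 : ℝ) ≤ n := by exact_mod_cast hn
  have hpi := Real.pi_pos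
  set x := Real.pi / (2 * n) with hx
  have hxn : 2 * n * x = Real.pi := by rw [hx]; field_simp
  have hs : 0 < Real.sin x := by
    apply Real.sin_pos_of_pos_of_lt_pi
    · positivity
    · nlinarith [show 0 < x by positivity]
  rw [Real.cot_eq_cos_div_sin, ← mul_div_assoc, eq_div_iff hs.ne', Finset.sum_mul]
  have : ∀ j ∈ Finset.range n, 2 * Real.sin (Real.pi * j / n) * Real.sin x =
      (fun k : ℕ => - Real.cos (2 * k * x - x)) (j + 1) -
      (fun k : ℕ => - Real.cos (2 * k * x - x)) j := by
    intro j _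
    have h1 : Real.pi * j / n = 2 * j * x := by rw [hx]; field_simp
    have h2 : 2 * ((j + 1 : ℕ) : ℝ) * x - x = 2 * j * x + x := by push_cast; ring
    simp only [h1, h2, Real.cos_add, Real.cos_sub]
    ring
  rw [Finset.sum_congr rfl this, Finset.sum_range_sub (fun k : ℕ => - Real.cos (2 * k * x - x))]
  simp only [hxn, Real.cos_pi_sub]
  simp
  ring

lemma Polynomial.roots_prod_X_sub_C_aux {n : ℕ} (f : Fin n → ℝ) :
    (∏ j : Fin n, (Polynomial.X - Polynomial.C (f j))).roots = Finset.univ.val.map f := by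
  have := Polynomial.roots_multiset_prod_X_sub_C (Finset.univ.val.map f)
  rw [Multiset.map_map] at this
  exact this

theorem cycle_laplacian_trace_norm (n : ℕ) (hn : 2 ≤ n) :
    traceNorm (1 - cycleAdj n) = ∑ j ∈ Finset.range n, 2 * Real.sin (Real.pi * j / n) ∧
    traceNorm (1 - cycleAdj n) = 2 * Real.cot (Real.pi / (2 * n)) := by
  have key : traceNorm (1 - cycleAdj n) =
      ∑ j ∈ Finset.range n, 2 * Real.sin (Real.pi * j / n) := by
    unfold traceNorm singularValues
    rw [aux_charpoly n hn, Polynomial.roots_prod_X_sub_C_aux]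
    rw [Multiset.map_map, ← Fin.sum_univ_eq_sum_range
      (fun j : ℕ => 2 * Real.sin (Real.pi * j / n)) n]
    change ∑ j : Fin n, Real.sqrt ((2 * Real.sin (Real.pi * (j : ℕ) / n)) ^ 2) = _
    refine Finset.sum_congr rfl fun j _ => Real.sqrt_sq ?_
    have hpi := Real.pi_pos
    have hn0 : (0 : ℝ) < n := by exact_mod_cast (by omega : 0 < n)
    have hj : ((j : ℕ) : ℝ) ≤ n := by exact_mod_cast j.2.le
    have := Real.sin_nonneg_of_nonneg_of_le_pi (x := Real.pi * (j : ℕ) / n) (by positivity)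
      (by rw [div_le_iff₀ hn0]; nlinarith)
    linarith
  exact ⟨key, key.trans (aux_sum n hn)⟩
end

section
/- Let n ≥ 2 and let L be the Laplacian matrix of the directed path P⃗_n, i.e. L = Δ⁺ − A where A is the n×n real matrix with A_{i,i+1} = 1 for 1 ≤ i ≤ n−1 and all other entries 0, and Δ⁺ = diag(1,…,1,0). Then the multiset of eigenvalues of L·Lᵀ is {4·sin²(πj/(2n)) : j = 0, 1, …, n−1}; equivalently, the singular values of L are 2·sin(πj/(2n)) for j = 0, 1, …, n−1. -/
open Matrix

lemma aux_rowsum (n : ℕ) (f : ℕ → ℝ) (m : ℕ) :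
    ∑ j : Fin n, (if (j : ℕ) = m then f j else 0) = if m < n then f m else 0 := by
  rw [Fin.sum_univ_eq_sum_range (fun j => if j = m then f j else 0) n]
  rw [Finset.sum_ite_eq']
  simp

lemma aux_L_apply (n : ℕ) (i j : Fin n) :
    (outDeg (pathAdj n) - pathAdj n) i j =
      (if (j : ℕ) = i then (if (i : ℕ) + 1 < n then 1 else 0) else 0)
        - (if (j : ℕ) = (i : ℕ) + 1 then 1 else 0) := by
  have h := aux_rowsum n (fun _ => 1) ((i : ℕ) + 1)
  simp only [Matrix.sub_apply, outDeg, pathAdj, Matrix.diagonal_apply, h, Fin.ext_iff, eq_comm]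

lemma aux_L_mulVec (n : ℕ) (c : ℕ → ℝ) (i : Fin n) :
    ((outDeg (pathAdj n) - pathAdj n) *ᵥ (fun k : Fin n => c k)) i
      = if (i : ℕ) + 1 < n then c i - c (i + 1) else 0 := by
  have h1 := aux_rowsum n (fun k => (if (i : ℕ) + 1 < n then 1 else 0) * c k) i
  have h2 := aux_rowsum n (fun k => c k) (i + 1)
  simp only [Matrix.mulVec, dotProduct, aux_L_apply, sub_mul, Finset.sum_sub_distrib, ite_mul,
    zero_mul, one_mul] at h1 h2 ⊢
  rw [h1, h2]
  simp only [i.2, if_true]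
  split_ifs <;> simp

lemma aux_LT_mulVec (n : ℕ) (w : ℕ → ℝ) (i : Fin n) :
    ((outDeg (pathAdj n) - pathAdj n)ᵀ *ᵥ (fun k : Fin n => w k)) i
      = (if (i : ℕ) + 1 < n then w i else 0) - (if 0 < (i : ℕ) then w (i - 1) else 0) := by
  have h1 := aux_rowsum n (fun k => if k + 1 < n then w k else 0) i
  have h2 := aux_rowsum n (fun k => if 0 < (i : ℕ) then w k else 0) (i - 1)
  have hi := i.2
  simp only [Matrix.mulVec, dotProduct, Matrix.transpose_apply, aux_L_apply, sub_mul,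
    Finset.sum_sub_distrib, ite_mul, zero_mul, one_mul]
  congr 1
  · rw [if_pos hi] at h1
    rw [← h1]
    exact Finset.sum_congr rfl fun k _ => by simp only [eq_comm]
  · rw [if_pos (by omega)] at h2
    rw [← h2]
    refine Finset.sum_congr rfl fun k _ => ?_
    split_ifs <;> first | rfl | omega

lemma aux_eigen (n : ℕ) (hn : 2 ≤ n) (j : ℕ) :
    ((outDeg (pathAdj n) - pathAdj n)ᵀ * (outDeg (pathAdj n) - pathAdj n)) *ᵥ
      (fun k : Fin n => Real.cos (Real.pi * j / (2 * n) * (2 * (k : ℕ) + 1)))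
    = (4 * Real.sin (Real.pi * j / (2 * n)) ^ 2) •
      (fun k : Fin n => Real.cos (Real.pi * j / (2 * n) * (2 * (k : ℕ) + 1))) := by
  have hn0 : (n : ℝ) ≠ 0 := by positivity
  set t := Real.pi * j / (2 * n) with ht
  have hend : Real.sin (t * (2 * n)) = 0 := by
    rw [ht, div_mul_cancel₀ _ (by positivity), mul_comm]
    exact Real.sin_nat_mul_pi j
  have hA : (outDeg (pathAdj n) - pathAdj n) *ᵥ
      (fun k : Fin n => Real.cos (t * (2 * (k : ℕ) + 1)))
      = fun k : Fin n => 2 * Real.sin t * Real.sin (t * (2 * ((k : ℕ) + 1))) := by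
    ext i
    rw [aux_L_mulVec n (fun k => Real.cos (t * (2 * k + 1)))]
    split_ifs with h
    · rw [show t * (2 * ((i : ℕ) : ℝ) + 1) = t * (2 * ((i : ℕ) + 1)) - t by ring,
        show t * (2 * (((i : ℕ) + 1 : ℕ) : ℝ) + 1) = t * (2 * ((i : ℕ) + 1)) + t by
          push_cast; ring, Real.cos_sub, Real.cos_add]
      ring
    · have : n = (i : ℕ) + 1 := by have := i.2; omega
      have h2 : (n : ℝ) = (i : ℕ) + 1 := by exact_mod_cast this
      rw [← h2, hend, mul_zero]
  rw [← Matrix.mulVec_mulVec, hA]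
  ext i
  rw [aux_LT_mulVec n (fun k => 2 * Real.sin t * Real.sin (t * (2 * ((k : ℝ) + 1))))]
  have e1 : (if (i : ℕ) + 1 < n then 2 * Real.sin t * Real.sin (t * (2 * (((i : ℕ) : ℝ) + 1)))
      else 0) = 2 * Real.sin t * Real.sin (t * (2 * (i : ℕ) + 1) + t) := by
    rw [show t * (2 * ((i : ℕ) : ℝ) + 1) + t = t * (2 * ((i : ℕ) + 1)) by ring]
    split_ifs with h
    · rfl
    · have : n = (i : ℕ) + 1 := by have := i.2; omega
      have h2 : (n : ℝ) = (i : ℕ) + 1 := by exact_mod_cast this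
      rw [← h2, hend, mul_zero]
  have e2 : (if 0 < (i : ℕ) then 2 * Real.sin t * Real.sin (t * (2 * ((((i : ℕ) - 1 : ℕ) : ℝ) + 1)))
      else 0) = 2 * Real.sin t * Real.sin (t * (2 * (i : ℕ) + 1) - t) := by
    rw [show t * (2 * ((i : ℕ) : ℝ) + 1) - t = t * (2 * (i : ℕ)) by ring]
    split_ifs with h
    · rw [Nat.cast_sub h]; simp
    · have : (i : ℕ) = 0 := by omega
      rw [this]; simp
  rw [e1, e2, Real.sin_add, Real.sin_sub]
  simp only [Pi.smul_apply, smul_eq_mul]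
  ring

lemma aux_angle (n : ℕ) (hn : 2 ≤ n) (j : ℕ) (hj : j < n) :
    0 ≤ Real.pi * j / (2 * n) ∧ Real.pi * j / (2 * n) < Real.pi / 2 := by
  have hn0 : (0 : ℝ) < n := by positivity
  have hj' : (j : ℝ) < n := by exact_mod_cast hj
  refine ⟨by positivity, ?_⟩
  rw [div_lt_div_iff₀ (by positivity) (by positivity)]
  nlinarith [Real.pi_pos]

lemma aux_root (n : ℕ) (hn : 2 ≤ n) (j : ℕ) (hj : j < n) :
    ((outDeg (pathAdj n) - pathAdj n) * (outDeg (pathAdj n) - pathAdj n)ᵀ).charpoly.IsRoot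
      (4 * Real.sin (Real.pi * j / (2 * n)) ^ 2) := by
  rw [Matrix.charpoly_mul_comm, Polynomial.IsRoot.def, Matrix.eval_charpoly,
    ← Matrix.exists_mulVec_eq_zero_iff]
  refine ⟨fun k : Fin n => Real.cos (Real.pi * j / (2 * n) * (2 * (k : ℕ) + 1)), ?_, ?_⟩
  rotate_left
  · rw [Matrix.sub_mulVec, aux_eigen n hn j]
    simp [Matrix.scalar_apply, ← Matrix.smul_one_eq_diagonal, Matrix.smul_mulVec]
  · intro h
    have h0 := congrFun h ⟨0, by omega⟩
    have ⟨a, b⟩ := aux_angle n hn j hj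
    have := Real.cos_pos_of_mem_Ioo ⟨by linarith [Real.pi_pos], b⟩
    simp at h0
    linarith

lemma aux_inj (n : ℕ) (hn : 2 ≤ n) :
    Set.InjOn (fun j : ℕ => 4 * Real.sin (Real.pi * j / (2 * n)) ^ 2) {j | j < n} := by
  intro a ha b hb hab
  obtain ⟨a0, a1⟩ := aux_angle n hn a ha
  obtain ⟨b0, b1⟩ := aux_angle n hn b hb
  have hs : Real.sin (Real.pi * a / (2 * n)) = Real.sin (Real.pi * b / (2 * n)) := by
    refine (sq_eq_sq₀ (Real.sin_nonneg_of_nonneg_of_le_pi a0 (by linarith))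
      (Real.sin_nonneg_of_nonneg_of_le_pi b0 (by linarith))).1 ?_
    simp only at hab
    linarith
  have := Real.injOn_sin ⟨by linarith, by linarith⟩ ⟨by linarith, by linarith⟩ hs
  have hn0 : (n : ℝ) ≠ 0 := by positivity
  have hp := Real.pi_ne_zero
  field_simp at this
  exact_mod_cast this

lemma aux_roots (n : ℕ) (hn : 2 ≤ n) :
    ((outDeg (pathAdj n) - pathAdj n) * (outDeg (pathAdj n) - pathAdj n)ᵀ).charpoly.roots
      = (Multiset.range n).map (fun j : ℕ => 4 * Real.sin (Real.pi * j / (2 * n)) ^ 2) := by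
  symm
  apply Multiset.eq_of_le_of_card_le
  · rw [Multiset.le_iff_subset]
    · intro x hx
      obtain ⟨j, hj, rfl⟩ := Multiset.mem_map.1 hx
      rw [Polynomial.mem_roots (Matrix.charpoly_monic _).ne_zero]
      exact aux_root n hn j (Multiset.mem_range.1 hj)
    · refine Multiset.Nodup.map_on ?_ (Multiset.nodup_range n)
      intro a ha b hb hab
      exact aux_inj n hn (Multiset.mem_range.1 ha) (Multiset.mem_range.1 hb) hab
  · refine (Polynomial.card_roots' _).trans ?_
    rw [Matrix.charpoly_natDegree_eq_dim]
    simp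

lemma aux_coe (n : ℕ) (f : ℝ → ℝ) :
    Multiset.map f (do let a ← Multiset.range n; pure (a : ℝ))
      = (Multiset.range n).map (fun j : ℕ => f j) := by
  simp [Multiset.bind_def, Multiset.pure_def, Multiset.bind_singleton, Multiset.map_map]

theorem path_laplacian_singular_values (n : ℕ) (hn : 2 ≤ n) :
    ((outDeg (pathAdj n) - pathAdj n) * (outDeg (pathAdj n) - pathAdj n)ᵀ).charpoly.roots
      = (Multiset.range n).map (fun j => 4 * Real.sin (Real.pi * j / (2 * n)) ^ 2) ∧
    singularValues (outDeg (pathAdj n) - pathAdj n)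
      = (Multiset.range n).map (fun j => 2 * Real.sin (Real.pi * j / (2 * n))) := by
  rw [aux_coe, aux_coe]
  refine ⟨aux_roots n hn, ?_⟩
  rw [singularValues, aux_roots n hn, Multiset.map_map]
  refine Multiset.map_congr rfl fun j hj => ?_
  obtain ⟨a, b⟩ := aux_angle n hn j (Multiset.mem_range.1 hj)
  have := Real.sin_nonneg_of_nonneg_of_le_pi a (by linarith)
  simp only [Function.comp]
  rw [show 4 * Real.sin (Real.pi * j / (2 * n)) ^ 2 = (2 * Real.sin (Real.pi * j / (2 * n))) ^ 2
    by ring, Real.sqrt_sq (by positivity)]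
end

section
/- Let x ≥ 0 and y ≥ 1 with n = x + y + 1, and let L be the Laplacian matrix of the oriented star S⃗_n(x, y) (center vertex with x out-arcs and y in-arcs). Then the multiset of eigenvalues of L·Lᵀ consists of 0 with multiplicity x, 1 with multiplicity y − 1, and the two roots of λ² − (x + x² + y + 1)λ + (x + x² + xy) = 0; equivalently, the singular values of L are 0 (x times), 1 (y − 1 times), and √(((x + x² + y + 1) ± √((x + x² + y + 1)² − 4(x + x² + xy)))/2). -/
open Matrix

theorem star_cases {x y : ℕ} {P : Fin (x + y + 1) → Prop} (h0 : P 0)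
    (h1 : ∀ i : Fin x, P (Fin.succ (Fin.castAdd y i)))
    (h2 : ∀ i : Fin y, P (Fin.succ (Fin.natAdd x i))) (i : Fin (x + y + 1)) : P i := by
  refine Fin.cases h0 (fun k => ?_) i
  exact Fin.addCases (motive := fun k => P (Fin.succ k)) h1 h2 k

theorem ostar_sum {x y : ℕ} (f : Fin (x + y + 1) → ℝ) :
    ∑ i, f i = f 0 + (∑ i : Fin x, f (Fin.succ (Fin.castAdd y i)) +
      ∑ i : Fin y, f (Fin.succ (Fin.natAdd x i))) := by
  rw [Fin.sum_univ_succ, Fin.sum_univ_add]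

theorem ostar_prod {x y : ℕ} (f : Fin (x + y + 1) → ℝ) :
    ∏ i, f i = f 0 * ((∏ i : Fin x, f (Fin.succ (Fin.castAdd y i))) *
      ∏ i : Fin y, f (Fin.succ (Fin.natAdd x i))) := by
  rw [Fin.prod_univ_succ, Fin.prod_univ_add]

/-- Entries of the star Laplacian. -/
noncomputable def ostarL (x y : ℕ) : Matrix (Fin (x + y + 1)) (Fin (x + y + 1)) ℝ :=
  fun i j => if (i : ℕ) = 0 then (if (j : ℕ) = 0 then (x : ℝ) else if (j : ℕ) ≤ x then -1 else 0)
    else if (i : ℕ) ≤ x then 0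
    else if (j : ℕ) = 0 then -1 else if (i : ℕ) = j then 1 else 0

theorem starL_eq (x y : ℕ) : outDeg (starAdj x y) - starAdj x y = ostarL x y := by
  ext i j
  rw [Matrix.sub_apply, outDeg, Matrix.diagonal_apply, ostar_sum]
  induction i using star_cases <;> induction j using star_cases <;>
  simp [starAdj, ostarL, Fin.ext_iff]

/-- The two columns. -/
noncomputable def starW (x y : ℕ) : Matrix (Fin (x + y + 1)) (Fin 2) ℝ :=
  fun i k => if k = 0 then (if (i : ℕ) = 0 then 1 else 0) else (if (i : ℕ) ≤ x then 0 else 1)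

theorem starLL_eq (x y : ℕ) : ostarL x y * (ostarL x y)ᵀ =
    Matrix.diagonal (fun i : Fin (x + y + 1) => if (i : ℕ) ≤ x then (0 : ℝ) else 1) +
    starW x y * (!![(x : ℝ) ^ 2 + x, -x; -x, 1] * (starW x y)ᵀ) := by
  ext i j
  rw [Matrix.add_apply, Matrix.diagonal_apply, Matrix.mul_apply, ostar_sum]
  simp only [Matrix.mul_apply, Fin.sum_univ_two]
  have hne : ∀ (i : Fin y) (k : Fin x), ¬ (x + (i : ℕ) = (k : ℕ)) := fun i k => by omega
  induction i using star_cases <;> induction j using star_cases <;>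
  simp [starW, ostarL, Fin.ext_iff, hne] <;> (try simp only [← Fin.ext_iff]) <;>
  (try simp) <;> grind

theorem star_det (x y : ℕ) (hy : 1 ≤ y) (t : ℝ) (h0 : t ≠ 0) (h1 : t ≠ 1) :
    (ostarL x y * (ostarL x y)ᵀ).charpoly.eval t =
      t ^ x * (t - 1) ^ (y - 1) * (t ^ 2 - (x + x ^ 2 + y + 1) * t + (x + x ^ 2 + x * y)) := by
  have h1' : t - 1 ≠ 0 := sub_ne_zero.2 h1
  rw [Matrix.eval_charpoly, starLL_eq]
  set d : Fin (x + y + 1) → ℝ := fun i => if (i : ℕ) ≤ x then t else t - 1 with hd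
  have hA : Matrix.scalar (Fin (x + y + 1)) t -
      (Matrix.diagonal (fun i : Fin (x + y + 1) => if (i : ℕ) ≤ x then (0 : ℝ) else 1) +
      starW x y * (!![(x : ℝ) ^ 2 + x, -x; -x, 1] * (starW x y)ᵀ)) =
      Matrix.diagonal d * (1 + (Matrix.diagonal (fun i => (d i)⁻¹) * starW x y) *
        (-(!![(x : ℝ) ^ 2 + x, -x; -x, 1] * (starW x y)ᵀ))) := by
    have hdd : Matrix.diagonal d * Matrix.diagonal (fun i => (d i)⁻¹) = 1 := by
      rw [Matrix.diagonal_mul_diagonal, ← Matrix.diagonal_one]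
      congr 1
      ext i
      have : d i ≠ 0 := by simp only [hd]; split_ifs <;> assumption
      exact mul_inv_cancel₀ this
    rw [mul_add, mul_one, Matrix.mul_assoc (Matrix.diagonal fun i => (d i)⁻¹), ← Matrix.mul_assoc (Matrix.diagonal d),
      hdd, Matrix.one_mul, Matrix.mul_neg, ← sub_eq_add_neg, ← sub_sub]
    congr 1
    rw [Matrix.scalar_apply, Matrix.diagonal_sub]
    congr 1
    ext i
    simp only [hd]
    split_ifs <;> simp
  have hW : (starW x y)ᵀ * (Matrix.diagonal (fun i => (d i)⁻¹) * starW x y) =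
      !![t⁻¹, 0; 0, y * (t - 1)⁻¹] := by
    ext k l
    rw [Matrix.mul_apply, ostar_sum]
    simp only [Matrix.diagonal_mul]
    fin_cases k <;> fin_cases l <;> simp [starW, hd]
  rw [hA, Matrix.det_mul, Matrix.det_one_add_mul_comm, Matrix.neg_mul, Matrix.mul_assoc, hW,
    Matrix.det_diagonal, ostar_prod, Matrix.det_fin_two]
  obtain ⟨z, rfl⟩ : ∃ z, y = z + 1 := ⟨y - 1, by omega⟩
  simp [hd]
  field_simp
  ring

theorem star_laplacian_singular_values (x y : ℕ) (hy : 1 ≤ y) :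
    let L := outDeg (starAdj x y) - starAdj x y
    let s : ℝ := x + x ^ 2 + y + 1
    let p : ℝ := x + x ^ 2 + x * y
    (L * Lᵀ).charpoly.roots
      = Multiset.replicate x (0 : ℝ) + Multiset.replicate (y - 1) (1 : ℝ) +
        {(s + Real.sqrt (s ^ 2 - 4 * p)) / 2, (s - Real.sqrt (s ^ 2 - 4 * p)) / 2} ∧
    singularValues L
      = Multiset.replicate x (0 : ℝ) + Multiset.replicate (y - 1) (1 : ℝ) +
        {Real.sqrt ((s + Real.sqrt (s ^ 2 - 4 * p)) / 2),
         Real.sqrt ((s - Real.sqrt (s ^ 2 - 4 * p)) / 2)} := by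
  intro L s p
  have hL : L = ostarL x y := starL_eq x y
  have hnn : 0 ≤ s ^ 2 - 4 * p := by
    have : s ^ 2 - 4 * p = ((x : ℝ) ^ 2 + x - y - 1) ^ 2 + 4 * x ^ 2 * y := by
      simp only [s, p]; ring
    rw [this]; positivity
  have hsq := Real.sq_sqrt hnn
  have hroots : (L * Lᵀ).charpoly.roots
      = Multiset.replicate x (0 : ℝ) + Multiset.replicate (y - 1) (1 : ℝ) +
        {(s + Real.sqrt (s ^ 2 - 4 * p)) / 2, (s - Real.sqrt (s ^ 2 - 4 * p)) / 2} := by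
    set r := Real.sqrt (s ^ 2 - 4 * p) with hr
    have key : (L * Lᵀ).charpoly = ((Multiset.replicate x (0 : ℝ) +
        Multiset.replicate (y - 1) (1 : ℝ) + {(s + r) / 2, (s - r) / 2}).map
          (fun a => Polynomial.X - Polynomial.C a)).prod := by
      apply Polynomial.eq_of_infinite_eval_eq
      refine Set.Infinite.mono ?_ (Set.Finite.infinite_compl (Set.toFinite {(0 : ℝ), 1}))
      intro t ht
      simp only [Set.mem_compl_iff, Set.mem_insert_iff, Set.mem_singleton_iff, not_or] at ht
      rw [Set.mem_ofPred_eq, hL, star_det x y hy t ht.1 ht.2]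
      simp
      linear_combination (1 / 4) * t ^ x * (t - 1) ^ (y - 1) * hsq
    rw [key, Polynomial.roots_multiset_prod_X_sub_C]
  refine ⟨hroots, ?_⟩
  rw [singularValues, hroots]
  simp
end

section
/- The directed cycle C⃗_n is determined by its Laplacian singular values: if D is any digraph of order n (adjacency matrix a 0–1 matrix with zero diagonal) whose Laplacian matrix L(D) = Δ⁺(D) − A(D) has the same multiset of singular values as L(C⃗_n) = I_n − A(C⃗_n), namely {2·sin(πj/n) : j = 0, …, n−1}, then D is isomorphic to C⃗_n, i.e. there is a permutation matrix P with A(D) = P·A(C⃗_n)·Pᵀ. -/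
open Matrix

theorem aux_sv {m : Type*} [Fintype m] [DecidableEq m] (M N : Matrix m m ℝ)
    (h : singularValues M = singularValues N) :
    (M * Mᵀ).trace = (N * Nᵀ).trace ∧
    ((M * Mᵀ) * (M * Mᵀ)).trace = ((N * Nᵀ) * (N * Nᵀ)).trace ∧ M.rank = N.rank := by
  have key : ∀ K : Matrix m m ℝ, ∃ e : m → ℝ, singularValues K = (Finset.univ.val.map fun i => Real.sqrt (e i)) ∧
      (∀ i, 0 ≤ e i) ∧ (K * Kᵀ).trace = ∑ i, e i ∧ ((K * Kᵀ) * (K * Kᵀ)).trace = ∑ i, e i ^ 2 ∧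
      K.rank = Fintype.card {i // e i ≠ 0} := by
    intro K
    have hp : (K * Kᵀ).PosSemidef := by
      simpa [conjTranspose_eq_transpose_of_trivial] using posSemidef_self_mul_conjTranspose K
    have hH : (K * Kᵀ).IsHermitian := hp.1
    refine ⟨hH.eigenvalues, ?_, hp.eigenvalues_nonneg, ?_, ?_, ?_⟩
    · unfold singularValues
      rw [hH.roots_charpoly_eq_eigenvalues, Multiset.map_map]
      rfl
    · have := hH.trace_eq_sum_eigenvalues
      simpa using this
    · have hs := hH.spectral_theorem
      conv_lhs => rw [hs]
      rw [← map_mul, Unitary.conjStarAlgAut_apply, Matrix.trace_mul_cycle]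
      rw [Unitary.coe_star_mul_self, one_mul, Matrix.diagonal_mul_diagonal, Matrix.trace_diagonal]
      simp [pow_two]
    · rw [← hH.rank_eq_card_non_zero_eigs, rank_self_mul_transpose]
  obtain ⟨e, h1, h2, h3, h4, h5⟩ := key M
  obtain ⟨e', h1', h2', h3', h4', h5'⟩ := key N
  have hE : (Finset.univ.val.map e) = Finset.univ.val.map e' := by
    have := congrArg (Multiset.map (fun x : ℝ => x ^ 2)) (h1.symm.trans (h.trans h1'))
    simpa [Multiset.map_map, Function.comp_def, Real.sq_sqrt, h2, h2'] using this
  refine ⟨?_, ?_, ?_⟩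
  · rw [h3, h3']
    simpa using congrArg Multiset.sum hE
  · rw [h4, h4']
    simpa [Multiset.map_map, Function.comp_def] using congrArg (fun s => (Multiset.map (fun x : ℝ => x ^ 2) s).sum) hE
  · rw [h5, h5', Fintype.card_subtype, Fintype.card_subtype]
    have := congrArg (fun s => (Multiset.countP (fun x : ℝ => x ≠ 0) s)) hE
    simpa [Multiset.countP_map, Finset.card_def, Finset.filter_val] using this

/-- Functional digraph adjacency. -/
def aux_F {n : ℕ} (f : Fin n → Fin n) : Matrix (Fin n) (Fin n) ℝ :=
  fun i j => if j = f i then 1 else 0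

theorem aux_entry {n : ℕ} (f : Fin n → Fin n) (i j : Fin n) :
    ((1 - aux_F f) * (1 - aux_F f)ᵀ : Matrix (Fin n) (Fin n) ℝ) i j = (if i = j then (1:ℝ) else 0) - (if f i = j then 1 else 0)
      - (if f j = i then 1 else 0) + (if f i = f j then 1 else 0) := by
  have e1 : (1 - aux_F f) * (1 - aux_F f)ᵀ
      = 1 - aux_F f - (aux_F f)ᵀ + aux_F f * (aux_F f)ᵀ := by
    rw [Matrix.transpose_sub, Matrix.transpose_one]; noncomm_ring
  rw [e1]
  simp [Matrix.mul_apply, aux_F, Matrix.one_apply, eq_comm]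

theorem aux_sq {n : ℕ} (f : Fin n → Fin n) :
    ∑ i : Fin n, ∑ j, (4 * (if i = j then (1:ℝ) else 0) + (if f i = j then 1 else 0)
      + (if f j = i then 1 else 0)) = 6 * n := by
  have : ∑ i : Fin n, ∑ j, (if f j = i then (1:ℝ) else 0) = n := by
    rw [Finset.sum_comm]; simp
  simp only [Finset.sum_add_distrib, this, ← Finset.mul_sum]
  simp
  ring

theorem aux_tr {n : ℕ} (f : Fin n → Fin n) :
    (((1 - aux_F f) * (1 - aux_F f)ᵀ) * ((1 - aux_F f) * (1 - aux_F f)ᵀ)).trace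
     = ∑ i, ∑ j, ((if i = j then (1:ℝ) else 0) - (if f i = j then 1 else 0)
      - (if f j = i then 1 else 0) + (if f i = f j then 1 else 0)) ^ 2 := by
  have hs : ((1 - aux_F f) * (1 - aux_F f)ᵀ)ᵀ = (1 - aux_F f) * (1 - aux_F f)ᵀ := by simp
  conv_lhs => enter [1, 2]; rw [← hs]
  simp only [Matrix.trace, Matrix.diag, Matrix.mul_apply (M := _ * _), Matrix.transpose_apply, aux_entry]
  simp only [← pow_two]

theorem aux_perm {n : ℕ} (f g : Fin n → Fin n) (hf : ∀ i, f i ≠ i) (hg : ∀ i, g i ≠ i)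
    (hg2 : ∀ i, g (g i) ≠ i) (hgi : Function.Injective g)
    (h : (((1 - aux_F f) * (1 - aux_F f)ᵀ) * ((1 - aux_F f) * (1 - aux_F f)ᵀ)).trace =
      (((1 - aux_F g) * (1 - aux_F g)ᵀ) * ((1 - aux_F g) * (1 - aux_F g)ᵀ)).trace) :
    Function.Injective f := by
  intro a b hab
  by_contra hne
  rw [aux_tr, aux_tr] at h
  have h1 : ∑ i, ∑ j, ((if i = j then (1:ℝ) else 0) - (if g i = j then 1 else 0)
      - (if g j = i then 1 else 0) + (if g i = g j then 1 else 0)) ^ 2 = 6 * (n : ℝ) := by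
    rw [← aux_sq g]
    refine Finset.sum_congr rfl fun i _ => Finset.sum_congr rfl fun j _ => ?_
    by_cases hij : i = j
    · subst hij; simp [hg]; norm_num
    · have : g i ≠ g j := fun e => hij (hgi e)
      by_cases h1 : g i = j
      · have : g j ≠ i := h1 ▸ hg2 i
        simp [*, (hg j).symm]
      · simp [*]
  rw [h1, ← aux_sq f] at h
  refine absurd h (ne_of_gt ?_)
  have pt : ∀ i j, (4 * (if i = j then (1:ℝ) else 0) + (if f i = j then 1 else 0)
      + (if f j = i then 1 else 0)) + (if i ≠ j ∧ f i = f j then 1 else 0) ≤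
      ((if i = j then (1:ℝ) else 0) - (if f i = j then 1 else 0)
      - (if f j = i then 1 else 0) + (if f i = f j then 1 else 0)) ^ 2 := by
    intro i j
    by_cases hij : i = j
    · subst hij; simp [hf]; norm_num
    · by_cases h3 : f i = f j
      · have h1 : f i ≠ j := fun e => hf j (h3 ▸ e)
        have h2 : f j ≠ i := fun e => hf i (h3 ▸ e)
        simp [*]
      · by_cases h1 : f i = j <;> by_cases h2 : f j = i <;> simp only [hij, h1, h2, h3] <;> norm_num
        all_goals simp_all
        all_goals norm_num
  have pt0 : ∀ i j, (4 * (if i = j then (1:ℝ) else 0) + (if f i = j then 1 else 0)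
      + (if f j = i then 1 else 0)) ≤
      ((if i = j then (1:ℝ) else 0) - (if f i = j then 1 else 0)
      - (if f j = i then 1 else 0) + (if f i = f j then 1 else 0)) ^ 2 := by
    intro i j
    refine le_trans ?_ (pt i j)
    split_ifs <;> norm_num
  refine Finset.sum_lt_sum (fun i _ => Finset.sum_le_sum fun j _ => pt0 i j) ⟨a, Finset.mem_univ _, ?_⟩
  refine Finset.sum_lt_sum (fun j _ => pt0 a j) ⟨b, Finset.mem_univ _, ?_⟩
  refine lt_of_lt_of_le ?_ (pt a b)
  rw [if_pos (c := a ≠ b ∧ f a = f b) ⟨hne, hab⟩]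
  linarith

theorem aux_ker {n : ℕ} (M : Matrix (Fin n) (Fin n) ℝ) (hr : n ≤ M.rank + 1)
    (u v : Fin n → ℝ) (hu : M *ᵥ u = 0) (hv : M *ᵥ v = 0) (h0 : u ≠ 0) : ∃ c : ℝ, v = c • u := by
  have h := LinearMap.finrank_range_add_finrank_ker M.mulVecLin
  have h2 : Module.finrank ℝ (LinearMap.ker M.mulVecLin) ≤ 1 := by
    unfold Matrix.rank at hr
    rw [Module.finrank_fin_fun] at h
    omega
  obtain ⟨w, hw⟩ := finrank_le_one_iff.mp h2
  obtain ⟨a, ha⟩ := hw ⟨u, by simpa using hu⟩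
  obtain ⟨b, hb⟩ := hw ⟨v, by simpa using hv⟩
  have ha' : a • (w : Fin n → ℝ) = u := congrArg Subtype.val ha
  have hb' : b • (w : Fin n → ℝ) = v := congrArg Subtype.val hb
  have : a ≠ 0 := by rintro rfl; simp at ha'; exact h0 ha'.symm
  refine ⟨b * a⁻¹, ?_⟩
  rw [← ha', ← hb', smul_smul]
  congr 1
  field_simp

theorem aux_Fmul {n : ℕ} (f : Fin n → Fin n) (v : Fin n → ℝ) :
    (1 - aux_F f) *ᵥ v = fun i => v i - v (f i) := by
  ext i
  rw [Matrix.sub_mulVec, Matrix.one_mulVec]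
  simp [Matrix.mulVec, dotProduct, aux_F]

theorem aux_cycle {n : ℕ} : cycleAdj n = aux_F (finRotate n) := by
  ext i j
  unfold cycleAdj aux_F
  rcases n with _ | n
  · exact i.elim0
  · rw [finRotate_apply]
    congr 1
    rw [Fin.ext_iff, Fin.val_add, Fin.val_one']
    simp

theorem aux_same {n : ℕ} (hn : 2 ≤ n) (i j : Fin n) : (finRotate n).SameCycle i j := by
  have h := support_finRotate_of_le hn
  have hi : ∀ i, finRotate n i ≠ i := fun i => by
    rw [← Equiv.Perm.mem_support, h]; simp
  exact (isCycle_finRotate_of_le hn).sameCycle (hi i) (hi j)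

theorem aux_rank {n : ℕ} (hn : 2 ≤ n) : n ≤ (1 - cycleAdj n).rank + 1 := by
  have h := LinearMap.finrank_range_add_finrank_ker (1 - cycleAdj n).mulVecLin
  rw [Module.finrank_fin_fun] at h
  have h2 : Module.finrank ℝ (LinearMap.ker (1 - cycleAdj n).mulVecLin) ≤ 1 := by
    refine finrank_le_one_iff.mpr ⟨⟨fun _ => 1, ?_⟩, ?_⟩
    · rw [LinearMap.mem_ker, Matrix.mulVecLin_apply, aux_cycle, aux_Fmul]; ext; simp
    · rintro ⟨v, hv⟩
      rw [LinearMap.mem_ker, Matrix.mulVecLin_apply, aux_cycle, aux_Fmul] at hv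
      have h1 : ∀ i, v (finRotate n i) = v i := fun i => by
        have := congrFun hv i
        simp only [Pi.zero_apply] at this; linarith
      have hp : ∀ (k : ℕ) i, v (((finRotate n) ^ k) i) = v i := by
        intro k
        induction k with
        | zero => simp
        | succ k ih => intro i; rw [pow_succ', Equiv.Perm.mul_apply, h1, ih]
      refine ⟨v ⟨0, by omega⟩, Subtype.ext ?_⟩
      ext i
      obtain ⟨k, -, hk⟩ := (aux_same hn ⟨0, by omega⟩ i).exists_pow_eq'
      simp [← hk, hp]
  unfold Matrix.rank
  omega

theorem aux_trace {n : ℕ} (A : Matrix (Fin n) (Fin n) ℝ)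
    (h01 : ∀ i j, A i j = 0 ∨ A i j = 1) (hdiag : ∀ i, A i i = 0) :
    ((outDeg A - A) * (outDeg A - A)ᵀ).trace = ∑ i, ((∑ j, A i j) ^ 2 + ∑ j, A i j) := by
  simp only [Matrix.trace, Matrix.diag, Matrix.mul_apply, Matrix.transpose_apply, Matrix.sub_apply,
    outDeg, Matrix.diagonal_apply]
  refine Finset.sum_congr rfl fun i _ => ?_
  have : ∀ j, ((if i = j then ∑ j, A i j else 0) - A i j) * ((if i = j then ∑ j, A i j else 0) - A i j)
      = (if i = j then (∑ j, A i j) ^ 2 else 0) + A i j := by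
    intro j
    by_cases h : i = j
    · subst h; simp [hdiag, pow_two]
    · rcases h01 i j with h' | h' <;> simp [h, h']
  rw [Finset.sum_congr rfl fun j _ => this j, Finset.sum_add_distrib]
  simp

theorem aux_outF {n : ℕ} (f : Fin n → Fin n) : outDeg (aux_F f) = 1 := by
  unfold outDeg aux_F
  simp

theorem cycle_determined_by_laplacian_singular_values
    (n : ℕ) (hn : 2 ≤ n) (A : Matrix (Fin n) (Fin n) ℝ)
    (h01 : ∀ i j, A i j = 0 ∨ A i j = 1) (hdiag : ∀ i, A i i = 0)
    (hsv : singularValues (outDeg A - A) = singularValues (1 - cycleAdj n)) :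
    ∃ σ : Equiv.Perm (Fin n),
      A = σ.permMatrix ℝ * cycleAdj n * (σ.permMatrix ℝ)ᵀ := by
  obtain ⟨ht, ht2, hr⟩ := aux_sv _ _ hsv
  have hR : n ≤ (outDeg A - A).rank + 1 := hr ▸ aux_rank hn
  have hrot : ∀ i, finRotate n i ≠ i := fun i => by
    rw [← Equiv.Perm.mem_support, support_finRotate_of_le hn]; simp
  -- degrees
  have hdeg : ∀ i, ∃ S : Finset (Fin n), (∀ j, A i j = if j ∈ S then 1 else 0) ∧
      ∑ j, A i j = (S.card : ℝ) := by
    intro i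
    have hS : ∀ j, A i j = if j ∈ Finset.univ.filter (fun j => A i j = 1) then 1 else 0 := by
      intro j
      rcases h01 i j with h | h <;> simp [h]
    refine ⟨Finset.univ.filter (fun j => A i j = 1), hS, ?_⟩
    rw [Finset.sum_congr rfl fun j _ => hS j]
    simp
  choose S hS hd using hdeg
  have htr : ∑ i, ((S i).card ^ 2 + (S i).card) = 2 * n := by
    have e : (1 : Matrix (Fin n) (Fin n) ℝ) - cycleAdj n = outDeg (cycleAdj n) - cycleAdj n := by
      rw [aux_cycle, aux_outF]
    rw [aux_trace A h01 hdiag, e, aux_trace] at ht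
    · have h1 : ∀ i, ∑ j, cycleAdj n i j = 1 := by
        intro i; rw [aux_cycle]; simp [aux_F]
      simp only [h1, hd] at ht
      have : ((∑ i, ((S i).card ^ 2 + (S i).card) : ℕ) : ℝ) = ((2 * n : ℕ) : ℝ) := by
        push_cast
        rw [ht]; simp; ring
      exact_mod_cast this
    · intro i j; unfold cycleAdj; split_ifs <;> simp
    · intro i; rw [aux_cycle]; exact if_neg (hrot i).symm
  have hrow : ∀ p, (S p).card = 0 → (outDeg A - A)ᵀ *ᵥ (Pi.single p 1) = 0 := by
    intro p hp
    have hp' : S p = ∅ := Finset.card_eq_zero.mp hp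
    ext j
    simp [outDeg, Matrix.diagonal_apply, hS, hp']
    rintro rfl
    exact hp'
  have hz : ∀ p q, (S p).card = 0 → (S q).card = 0 → p = q := by
    intro p q hp hq
    by_contra hne
    obtain ⟨c, hc⟩ := aux_ker (outDeg A - A)ᵀ (by rwa [rank_transpose]) _ _ (hrow p hp) (hrow q hq)
      (by simp)
    have := congrFun hc q
    simp [hne, Ne.symm hne] at this
  have hone : ∀ i, (S i).card = 1 := by
    have hc : ∀ m : ℕ, m = 0 ∨ m = 1 ∨ 6 ≤ m ^ 2 + m := by
      intro m
      by_cases h : 2 ≤ m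
      · right; right; nlinarith
      · omega
    have hsum2 : ∑ i : Fin n, 2 = 2 * n := by simp [mul_comm]
    have hnz : ∀ p, (S p).card ≠ 0 := by
      intro p hp
      rw [← Finset.add_sum_erase _ _ (Finset.mem_univ p), hp] at htr
      have hcard : (Finset.univ.erase p).card = n - 1 := by simp
      by_cases hex : ∃ q, 6 ≤ (S q).card ^ 2 + (S q).card
      · obtain ⟨q, hq⟩ := hex
        have hqp : q ≠ p := by rintro rfl; rw [hp] at hq; omega
        rw [← Finset.add_sum_erase (Finset.univ.erase p) _ (Finset.mem_erase.mpr ⟨hqp, Finset.mem_univ q⟩)] at htr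
        have h3 : ((Finset.univ.erase p).erase q).card * 2 ≤
            ∑ i ∈ (Finset.univ.erase p).erase q, ((S i).card ^ 2 + (S i).card) := by
          rw [← smul_eq_mul]
          refine Finset.card_nsmul_le_sum _ _ _ fun i hi => ?_
          have hip : i ≠ p := by simp at hi; exact hi.2
          rcases hc (S i).card with h | h | h
          · exact absurd (hz i p h hp) hip
          · rw [h]; norm_num
          · omega
        rw [Finset.card_erase_of_mem (Finset.mem_erase.mpr ⟨hqp, Finset.mem_univ q⟩), hcard] at h3
        omega
      · push Not at hex
        have h3 : ∑ i ∈ (Finset.univ.erase p), ((S i).card ^ 2 + (S i).card) ≤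
            (Finset.univ.erase p).card • 2 := by
          refine Finset.sum_le_card_nsmul _ _ _ fun i hi => ?_
          have := hex i
          rcases hc (S i).card with h | h | h
          · rw [h]; norm_num
          · rw [h]; norm_num
          · omega
        rw [hcard, smul_eq_mul] at h3
        omega
    by_contra! hex
    obtain ⟨q, hq⟩ := hex
    have hlt : ∑ i : Fin n, 2 < ∑ i, ((S i).card ^ 2 + (S i).card) := by
      refine Finset.sum_lt_sum (fun i _ => ?_) ⟨q, Finset.mem_univ _, ?_⟩
      · rcases hc (S i).card with h | h | h
        · exact absurd h (hnz i)
        · rw [h]; norm_num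
        · omega
      · rcases hc (S q).card with h | h | h
        · exact absurd h (hnz q)
        · exact absurd h hq
        · omega
    omega
  have hf : ∀ i, ∃ a, S i = {a} := fun i => Finset.card_eq_one.mp (hone i)
  choose f hf using hf
  have hA : A = aux_F f := by
    ext i j
    rw [hS, hf]; simp [aux_F]
  subst hA
  rw [aux_outF] at ht2 hR
  have hfi : ∀ i, f i ≠ i := by
    intro i h
    have := hdiag i
    simp [aux_F, h] at this
  have hinj : Function.Injective f := by
    rcases Nat.lt_or_ge 2 n with h3 | h3
    · rw [aux_cycle] at ht2
      refine aux_perm f (finRotate n) hfi hrot ?_ (finRotate n).injective ht2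
      intro i hi
      obtain ⟨m, rfl⟩ : ∃ m, n = m + 3 := ⟨n - 3, by omega⟩
      rw [finRotate_apply, finRotate_apply, Fin.ext_iff, Fin.val_add, Fin.val_add] at hi
      have := i.2
      simp only [Fin.val_one, Nat.mod_add_mod] at hi
      rcases Nat.lt_or_ge (i.val + 2) (m + 3) with h | h
      · rw [Nat.mod_eq_of_lt (by omega)] at hi; omega
      · rw [Nat.mod_eq_sub_mod (by omega), Nat.mod_eq_of_lt (by omega)] at hi; omega
    · obtain rfl : n = 2 := by omega
      intro a b hab
      have := hfi a
      have := hfi b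
      omega
  let g : Equiv.Perm (Fin n) := Equiv.ofBijective f (Finite.injective_iff_bijective.mp hinj)
  have hg : ∀ i, g i = f i := fun i => rfl
  have hsame : ∀ i j, g.SameCycle i j := by
    intro i j
    classical
    obtain ⟨c, hc⟩ := aux_ker _ hR (fun _ => 1) (fun k => if g.SameCycle i k then 1 else 0)
      (by rw [aux_Fmul]; ext; simp)
      (by rw [aux_Fmul]; ext k; simp [← hg])
      (fun h => by have := congrFun h i; simp at this)
    have h1 := congrFun hc i
    have h2 := congrFun hc j
    simp at h1 h2
    by_contra hne
    rw [if_pos (Equiv.Perm.SameCycle.refl g i)] at h1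
    simp [hne, ← h1] at h2
  have hcyc : g.IsCycle := ⟨⟨0, by omega⟩, hfi _, fun j _ => hsame _ j⟩
  have hsupp : g.support = Finset.univ := by
    ext i; simp [hg, hfi]
  have hconj : IsConj g (finRotate n) := hcyc.isConj (isCycle_finRotate_of_le hn)
    (by rw [hsupp, support_finRotate_of_le hn])
  obtain ⟨σ, hσ⟩ := isConj_iff.mp hconj
  refine ⟨σ, ?_⟩
  rw [aux_cycle, ← hσ]
  ext i j
  rw [Equiv.Perm.permMatrix, ← PEquiv.toMatrix_symm, ← Equiv.toPEquiv_symm,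
    PEquiv.toMatrix_toPEquiv_mul, PEquiv.mul_toMatrix_toPEquiv]
  simp [aux_F, hg]
end
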